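/- For every derivable context judgement ⊢ Γ in GSeTT, the judgement ⊢ ⟦Γ⟧_B is derivable in HoTT (Lemma 4.1, context part). -/

import Mathlib

/-! ### Deep embedding of the fragment of Martin-Löf type theory ("HoTT") -/

/-- HoTT variable names: `Sum.inl n` is the image of CaTT/GSeTT variable `n`,
`Sum.inr k` are extra HoTT-only names. -/
abbrev HVar : Type := ℕ ⊕ ℕ

/-- The fixed variable `B`, not the name of any CaTT/GSeTT variable. -/
def Bv : HVar := Sum.inr 0

mutual
/-- Pre-terms of HoTT. `J A u x y e P p` is the Paulin-Mohring eliminator with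
base point `u : A`, motive `P` (with bound variables `x y e`) and base case `p`. -/
inductive HTm : Type
  | var : HVar → HTm
  | refl : HTy → HTm → HTm
  | J : HTy → HTm → HVar → HVar → HVar → HTy → HTm → HTm
  | app : HTm → HTm → HTm
  | lam : HVar → HTy → HTm → HTm

/-- Pre-types of HoTT: the Tarski universe `univ`, `el`, identity types and Π-types. -/
inductive HTy : Type
  | univ : HTy
  | el : HTm → HTy
  | id : HTy → HTm → HTm → HTy
  | pi : HVar → HTy → HTy → HTy
end

/-- Pre-substitutions of HoTT (head = most recent binding). -/
abbrev HSubst := List (HVar × HTm)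
/-- Pre-contexts of HoTT (head = most recent declaration). -/
abbrev HCtx := List (HVar × HTy)

def hlookup : HSubst → HVar → HTm
  | [], x => .var x
  | (y, t) :: γ, x => if y = x then t else hlookup γ x

/-- Remove the bindings of a bound variable from a substitution. -/
def hdrop (γ : HSubst) (x : HVar) : HSubst := γ.filter (fun q => q.1 ≠ x)

mutual
/-- Action of substitutions on HoTT pre-terms. -/
def hsubTm : HTm → HSubst → HTm
  | .var x, γ => hlookup γ x
  | .refl A u, γ => .refl (hsubTy A γ) (hsubTm u γ)
  | .J A u x y e P p, γ =>
      .J (hsubTy A γ) (hsubTm u γ) x y e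
        (hsubTy P (hdrop (hdrop (hdrop γ x) y) e)) (hsubTm p γ)
  | .app f u, γ => .app (hsubTm f γ) (hsubTm u γ)
  | .lam x A u, γ => .lam x (hsubTy A γ) (hsubTm u (hdrop γ x))
/-- Action of substitutions on HoTT pre-types. -/
def hsubTy : HTy → HSubst → HTy
  | .univ, _ => .univ
  | .el a, γ => .el (hsubTm a γ)
  | .id A u v, γ => .id (hsubTy A γ) (hsubTm u γ) (hsubTm v γ)
  | .pi x A B, γ => .pi x (hsubTy A γ) (hsubTy B (hdrop γ x))
end

/-- Composition of HoTT substitutions. -/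
def hcomp (δ γ : HSubst) : HSubst := δ.map (fun p => (p.1, hsubTm p.2 γ))

/-- The identity substitution of a context. -/
def hid (Γ : HCtx) : HSubst := Γ.map (fun p => (p.1, HTm.var p.1))

def hassoc : HCtx → HVar → Option HTy
  | [], _ => none
  | (y, A) :: Γ, x => if y = x then some A else hassoc Γ x

mutual
/-- Definitional equality of HoTT pre-terms, generated by the computation rule
`J(A,u,P,p) v refl ≡ p` together with congruence rules. -/
inductive HTmEq : HTm → HTm → Prop
  | jbeta (A : HTy) (u : HTm) (x y e : HVar) (P : HTy) (p v : HTm) (B : HTy) (w : HTm) :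
      HTmEq (.app (.app (.J A u x y e P p) v) (.refl B w)) p
  | refl (u : HTm) : HTmEq u u
  | symm : HTmEq u v → HTmEq v u
  | trans : HTmEq u v → HTmEq v w → HTmEq u w
  | reflCong : HTyEq A A' → HTmEq u u' → HTmEq (.refl A u) (.refl A' u')
  | JCong : HTyEq A A' → HTmEq u u' → HTyEq P P' → HTmEq p p' →
      HTmEq (.J A u x y e P p) (.J A' u' x y e P' p')
  | appCong : HTmEq f f' → HTmEq u u' → HTmEq (.app f u) (.app f' u')
  | lamCong : HTyEq A A' → HTmEq u u' → HTmEq (.lam x A u) (.lam x A' u')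

/-- Definitional equality of HoTT pre-types. -/
inductive HTyEq : HTy → HTy → Prop
  | refl (A : HTy) : HTyEq A A
  | symm : HTyEq A B → HTyEq B A
  | trans : HTyEq A B → HTyEq B C → HTyEq A C
  | elCong : HTmEq a a' → HTyEq (.el a) (.el a')
  | idCong : HTyEq A A' → HTmEq u u' → HTmEq v v' → HTyEq (.id A u v) (.id A' u' v')
  | piCong : HTyEq A A' → HTyEq B B' → HTyEq (.pi x A B) (.pi x A' B')
end

mutual
/-- Validity of HoTT contexts: `⊢ Γ`. -/
inductive HCtxJ : HCtx → Prop
  | nil : HCtxJ []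
  | cons : HCtxJ Γ → HTyJ Γ A → HCtxJ ((x, A) :: Γ)

/-- Validity of HoTT types: `Γ ⊢ A`. -/
inductive HTyJ : HCtx → HTy → Prop
  | univ : HCtxJ Γ → HTyJ Γ .univ
  | el : HTmJ Γ a .univ → HTyJ Γ (.el a)
  | id : HTmJ Γ u A → HTmJ Γ v A → HTyJ Γ (.id A u v)
  | pi : HTyJ Γ A → HTyJ ((x, A) :: Γ) B → HTyJ Γ (.pi x A B)
  | conv : HTyJ Γ A → HTyEq A B → HTyJ Γ B

/-- Typing of HoTT terms: `Γ ⊢ u : A`. -/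
inductive HTmJ : HCtx → HTm → HTy → Prop
  | var : HCtxJ Γ → hassoc Γ x = some A → HTmJ Γ (.var x) A
  | refl : HTmJ Γ u A → HTmJ Γ (.refl A u) (.id A u u)
  | lam : HTyJ Γ A → HTmJ ((x, A) :: Γ) u B → HTmJ Γ (.lam x A u) (.pi x A B)
  | app : HTmJ Γ f (.pi x A B) → HTmJ Γ u A → HTmJ Γ (.app f u) (hsubTy B [(x, u)])
  | J : HTyJ Γ A → HTmJ Γ u A →
      HTyJ ((e, .id A (.var x) (.var y)) :: (y, A) :: (x, A) :: Γ) P →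
      HTmJ Γ p (hsubTy P [(x, u), (y, u), (e, .refl A u)]) →
      HTmJ Γ (.J A u x y e P p)
        (.pi y A (.pi e (.id A u (.var y)) (hsubTy P [(x, u)])))
  | conv : HTmJ Γ u A → HTyEq A B → HTmJ Γ u B
  | convTm : HTmJ Γ u A → HTmEq u v → HTmJ Γ v A

/-- Typing of HoTT substitutions: `Δ ⊢ γ : Γ`. -/
inductive HSubJ : HCtx → HSubst → HCtx → Prop
  | nil : HCtxJ Δ → HSubJ Δ [] []
  | cons : HSubJ Δ γ Γ → HTyJ Γ A → HTmJ Δ t (hsubTy A γ) →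
      HSubJ Δ ((x, t) :: γ) ((x, A) :: Γ)
end

mutual
/-- Iterated identity types `Idⁿ_A(u)`. -/
def idN : ℕ → HTy → HTm → HTy
  | 0, A, _ => A
  | n+1, A, u => .id (idN n A u) (reflN n A u) (reflN n A u)
/-- Iterated reflexivities `reflⁿ_{A,u}`. -/
def reflN : ℕ → HTy → HTm → HTm
  | 0, _, u => u
  | n+1, A, u => .refl (idN n A u) (reflN n A u)
end

/-- Π-lifting `Π_Γ.A`: successively bind all variables of `Γ`. -/
def piLift : HCtx → HTy → HTy
  | [], A => A
  | (x, T) :: Γ, A => piLift Γ (.pi x T A)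

/-- λ-lifting `λ_Γ.u`: successively bind all variables of `Γ`. -/
def lamLift : HCtx → HTm → HTm
  | [], u => u
  | (x, T) :: Γ, u => lamLift Γ (.lam x T u)

/-! ### The dependent type theory GSeTT -/

/-- Pre-types of GSeTT: `⋆` and `u →_A v` (terms of GSeTT are variables, i.e. `ℕ`). -/
inductive GTy : Type
  | obj : GTy
  | arr : GTy → ℕ → ℕ → GTy
deriving DecidableEq

/-- Pre-contexts of GSeTT (head = most recent declaration). -/
abbrev GCtx := List (ℕ × GTy)

def gassoc : GCtx → ℕ → Option GTy
  | [], _ => none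
  | (y, A) :: Γ, x => if y = x then some A else gassoc Γ x

mutual
/-- `⊢ Γ` in GSeTT. -/
inductive GCtxJ : GCtx → Prop
  | nil : GCtxJ []
  | cons : GCtxJ Γ → GTyJ Γ A → GCtxJ ((x, A) :: Γ)
/-- `Γ ⊢ A` in GSeTT. -/
inductive GTyJ : GCtx → GTy → Prop
  | obj : GCtxJ Γ → GTyJ Γ .obj
  | arr : GTmJ Γ u A → GTmJ Γ v A → GTyJ Γ (.arr A u v)
/-- `Γ ⊢ x : A` in GSeTT (terms are variables). -/
inductive GTmJ : GCtx → ℕ → GTy → Prop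
  | var : GCtxJ Γ → gassoc Γ x = some A → GTmJ Γ x A
end

/-- The variables declared in a GSeTT context. -/
def gvars (Γ : GCtx) : List ℕ := Γ.map Prod.fst

/-- The auxiliary judgement `Γ ⊢_ps x : A` recognising ps-contexts;
all declared variables are required to be pairwise distinct. -/
inductive GPsAux : GCtx → ℕ → GTy → Prop
  | pss (x : ℕ) : GPsAux [(x, .obj)] x .obj
  | pse : GPsAux Γ x A → y ∉ gvars Γ → f ∉ gvars Γ → f ≠ y →
      GPsAux ((f, .arr A x y) :: (y, A) :: Γ) f (.arr A x y)
  | psd : GPsAux Γ f (.arr A x y) → GPsAux Γ y A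

/-- The judgement `Γ ⊢_ps` recognising ps-contexts. -/
inductive GPs : GCtx → Prop
  | ps : GPsAux Γ x .obj → GPs Γ

/-- Dimension of a GSeTT type: `dim ⋆ = -1`, `dim (u →_A v) = dim A + 1`. -/
def gdim : GTy → ℤ
  | .obj => -1
  | .arr A _ _ => gdim A + 1

/-- Dimension of a GSeTT context: the maximal dimension of the types of its variables. -/
def gdimCtx (Γ : GCtx) : ℤ := (Γ.map (fun p => gdim p.2)).foldr max (-1)

/-- The `i`-source `∂ᵢ⁻Γ` of a ps-context. -/
def gsrc (i : ℤ) : GCtx → GCtx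
  | (f, F) :: (y, A) :: Δ =>
      if gdim A + 1 ≥ i then gsrc i Δ else (f, F) :: (y, A) :: gsrc i Δ
  | Γ => Γ

/-- The `i`-target `∂ᵢ⁺Γ` of a ps-context. -/
def gtgt (i : ℤ) : GCtx → GCtx
  | (f, F) :: (y, A) :: Δ =>
      if gdim A + 1 > i then gtgt i Δ
      else if gdim A + 1 = i then (y, A) :: (gtgt i Δ).tail
      else (f, F) :: (y, A) :: gtgt i Δ
  | Γ => Γ

/-- Translation of GSeTT types into HoTT. -/
def ginterpTy : GTy → HTy
  | .obj => .el (.var Bv)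
  | .arr A x y => .id (ginterpTy A) (.var (Sum.inl x)) (.var (Sum.inl y))

/-- Translation of GSeTT contexts into HoTT contexts (`⟦∅⟧_B = (B : Type)`). -/
def ginterpCtx : GCtx → HCtx
  | [] => [(Bv, .univ)]
  | (x, A) :: Γ => (Sum.inl x, ginterpTy A) :: ginterpCtx Γ

-- Names may repeat in a context, but those declared above `B` are all `Sum.inl`: none shadows it.
theorem hassoc_ginterpCtx_Bv (Γ : GCtx) : hassoc (ginterpCtx Γ) Bv = some .univ := by
  induction Γ with
  | nil => simp [ginterpCtx, hassoc]
  | cons _ Γ ih => simpa [ginterpCtx, hassoc, Bv] using ih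

theorem hassoc_ginterpCtx_inl (Γ : GCtx) (x : ℕ) :
    hassoc (ginterpCtx Γ) (Sum.inl x) = (gassoc Γ x).map ginterpTy := by
  induction Γ with
  | nil => simp [ginterpCtx, hassoc, gassoc, Bv]
  | cons d Γ ih => by_cases h : d.1 = x <;> simp [ginterpCtx, hassoc, gassoc, h, ih]

theorem GTmJ.hTmJ_ginterpTy {Γ : GCtx} {x : ℕ} {A : GTy} (hx : GTmJ Γ x A)
    (hΓ : HCtxJ (ginterpCtx Γ)) :
    HTmJ (ginterpCtx Γ) (.var (Sum.inl x)) (ginterpTy A) := by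
  cases hx with
  | var _ hxA => exact .var hΓ (by rw [hassoc_ginterpCtx_inl, hxA, Option.map_some])

theorem GTyJ.hTyJ_ginterpTy {Γ : GCtx} {A : GTy} (hA : GTyJ Γ A)
    (hΓ : HCtxJ (ginterpCtx Γ)) : HTyJ (ginterpCtx Γ) (ginterpTy A) := by
  cases hA with
  | obj => exact .el (.var hΓ (hassoc_ginterpCtx_Bv Γ))
  | arr hu hv => exact .id (hu.hTmJ_ginterpTy hΓ) (hv.hTmJ_ginterpTy hΓ)

/-- Lemma 4.1, context part. -/
theorem stmt7 (Γ : GCtx) (h : GCtxJ Γ) : HCtxJ (ginterpCtx Γ) := by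
  induction Γ with
  | nil => exact .cons .nil (.univ .nil)
  | cons _ Γ ih =>
    cases h with
    | cons hΓ hA => exact .cons (ih hΓ) (hA.hTyJ_ginterpTy (ih hΓ))
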